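/- Let {φ_j}_{j=0}^p ⊂ P_p and positive reals {λ_j}_{j=0}^p satisfy λ_j ∫_{−1}^{1} (I φ_j)'(I v)' ds = ∫_{−1}^{1} φ_j v ds for all v ∈ P_p, orthonormalized so that ∫_{−1}^{1} (I φ_j)'(I φ_k)' ds = δ_{jk}. Then for any symmetric positive definite matrices A and M, any τ > 0 and any p ≥ 0, every v ∈ V_p written as v(s) = Σ_{j=0}^p v_j φ_j(s) with coefficients v_j ∈ ℝⁿ, not all zero, satisfies 1/2 ≤ L(v,v) / H(v) ≤ 2, where L(v,v) := B(v, Pv) and H(v) := Σ_{j=0}^p v_jᵀ (M + (τ√λ_j/2) A) A⁻¹ (M + (τ√λ_j/2) A) v_j. -/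

import Mathlib

open Matrix Polynomial

/-- The `k`-th Legendre polynomial (Rodrigues' formula), normalized so that `L_k(1) = 1`. -/
noncomputable def legendre (k : ℕ) : Polynomial ℝ :=
  ((2 ^ k * (Nat.factorial k) : ℝ))⁻¹ •
    ((fun q => Polynomial.derivative q)^[k] ((Polynomial.X ^ 2 - 1) ^ k))

/-- Evaluation at `s` of the `ℝⁿ`-valued polynomial with coefficients `c` (degree ≤ p). -/
noncomputable def pev {n p : ℕ} (c : Fin (p + 1) → Fin n → ℝ) (s : ℝ) : Fin n → ℝ :=
  ∑ j : Fin (p + 1), s ^ (j : ℕ) • c j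

/-- Evaluation at `s` of the derivative of the `ℝⁿ`-valued polynomial with coefficients `c`. -/
noncomputable def pdev {n p : ℕ} (c : Fin (p + 1) → Fin n → ℝ) (s : ℝ) : Fin n → ℝ :=
  ∑ j : Fin (p + 1), ((((j : ℕ) : ℝ)) * s ^ ((j : ℕ) - 1)) • c j

/-- Evaluation at `s` of `(I v)'`, the derivative of the reconstruction `I v` of the
`ℝⁿ`-valued polynomial `v` with coefficients `c`, where the reconstruction operator
`I v := v − v(−1)·(−1)^p (L_p − L_{p+1})/2` acts coefficientwise. -/
noncomputable def reconD {n p : ℕ} (c : Fin (p + 1) → Fin n → ℝ) (s : ℝ) : Fin n → ℝ :=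
  pdev c s -
    ((-1 : ℝ) ^ p * (Polynomial.derivative (legendre p - legendre (p + 1))).eval s / 2) •
      pev c (-1)

/-- The DG bilinear form `B(u, ·)` applied to a test function `g : ℝ → ℝⁿ`:
`B(u,g) = ∫_{−1}^{1} (u'(s), g(s))_M ds + (u(−1), g(−1))_M + (τ/2) ∫_{−1}^{1} (u(s), g(s))_A ds`,
where `(u,v)_M := vᵀ M u`. -/
noncomputable def Bform {n p : ℕ} (M A : Matrix (Fin n) (Fin n) ℝ) (τ : ℝ)
    (c : Fin (p + 1) → Fin n → ℝ) (g : ℝ → Fin n → ℝ) : ℝ :=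
  (∫ s in (-1 : ℝ)..1, g s ⬝ᵥ (M *ᵥ pdev c s)) + g (-1) ⬝ᵥ (M *ᵥ pev c (-1)) +
    (τ / 2) * ∫ s in (-1 : ℝ)..1, g s ⬝ᵥ (A *ᵥ pev c s)

/-- The operator `P v := A⁻¹ M (I v)' + (τ/2) v`, evaluated at `s`. -/
noncomputable def Pop {n p : ℕ} (M A : Matrix (Fin n) (Fin n) ℝ) (τ : ℝ)
    (c : Fin (p + 1) → Fin n → ℝ) (s : ℝ) : Fin n → ℝ :=
  (A⁻¹ * M) *ᵥ reconD c s + (τ / 2) • pev c s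

/-- The scalar reconstruction operator `I : P_p → P_{p+1}`,
`I v := v − v(−1)·(−1)^p (L_p − L_{p+1})/2`. -/
noncomputable def recon (p : ℕ) (v : Polynomial ℝ) : Polynomial ℝ :=
  v - (v.eval (-1) * (-1 : ℝ) ^ p / 2) • (legendre p - legendre (p + 1))

/-- Evaluation at `s` of `v = Σ_j φ_j ⊗ w_j ∈ V_p`. -/
noncomputable def eEv {n p : ℕ} (φ : Fin (p + 1) → Polynomial ℝ)
    (w : Fin (p + 1) → Fin n → ℝ) (s : ℝ) : Fin n → ℝ :=
  ∑ j, (φ j).eval s • w j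

/-- Evaluation at `s` of `v' = Σ_j φ_j' ⊗ w_j`. -/
noncomputable def eDv {n p : ℕ} (φ : Fin (p + 1) → Polynomial ℝ)
    (w : Fin (p + 1) → Fin n → ℝ) (s : ℝ) : Fin n → ℝ :=
  ∑ j, (Polynomial.derivative (φ j)).eval s • w j

/-- Evaluation at `s` of `(I v)' = Σ_j (I φ_j)' ⊗ w_j` (the reconstruction acting
coefficientwise). -/
noncomputable def eIDv {n p : ℕ} (φ : Fin (p + 1) → Polynomial ℝ)
    (w : Fin (p + 1) → Fin n → ℝ) (s : ℝ) : Fin n → ℝ :=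
  ∑ j, (Polynomial.derivative (recon p (φ j))).eval s • w j

/-- `L(v,v) := B(v, P v)` for `v = Σ_j φ_j ⊗ w_j`, where
`P v := A⁻¹ M (I v)' + (τ/2) v` and
`B(u,v) := ∫_{−1}^{1} (u', v)_M ds + (u(−1), v(−1))_M + (τ/2) ∫_{−1}^{1} (u, v)_A ds`. -/
noncomputable def Lval {n p : ℕ} (M A : Matrix (Fin n) (Fin n) ℝ) (τ : ℝ)
    (φ : Fin (p + 1) → Polynomial ℝ) (w : Fin (p + 1) → Fin n → ℝ) : ℝ :=
  (∫ s in (-1 : ℝ)..1,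
      ((A⁻¹ * M) *ᵥ eIDv φ w s + (τ / 2) • eEv φ w s) ⬝ᵥ (M *ᵥ eDv φ w s)) +
    ((A⁻¹ * M) *ᵥ eIDv φ w (-1) + (τ / 2) • eEv φ w (-1)) ⬝ᵥ (M *ᵥ eEv φ w (-1)) +
    (τ / 2) * ∫ s in (-1 : ℝ)..1,
      ((A⁻¹ * M) *ᵥ eIDv φ w s + (τ / 2) • eEv φ w s) ⬝ᵥ (A *ᵥ eEv φ w s)

/-- The block-diagonal preconditioner quadratic form
`H(v) := Σ_j w_jᵀ (M + (τ√λ_j/2) A) A⁻¹ (M + (τ√λ_j/2) A) w_j`. -/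
noncomputable def Hval {n p : ℕ} (M A : Matrix (Fin n) (Fin n) ℝ) (τ : ℝ)
    (lam : Fin (p + 1) → ℝ) (w : Fin (p + 1) → Fin n → ℝ) : ℝ :=
  ∑ j, w j ⬝ᵥ (((M + (τ * Real.sqrt (lam j) / 2) • A) * A⁻¹ *
      (M + (τ * Real.sqrt (lam j) / 2) • A)) *ᵥ w j)

/-!
Duality of the reconstruction, `∫ g (I v)' = ∫ g v' + g(-1) v(-1)` for `g ∈ P_p`, turns
`B(v, g)` into `∫ (P v, g)_A`, so that `L(v, v) = ∫ ‖P v‖_A²` with `P v = A⁻¹ M (I v)' + (τ/2) v`.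
Likewise `H(v) = ∑ ‖A⁻¹ M v_j + (τ√λ_j/2) v_j‖_A²`. In both cases the two summands inside the norm
have a nonnegative `A`-inner product: for `H` because `M` is positive semidefinite, for `L` because
`2 ∫ (v, (I v)')_M = ‖v(1)‖_M² + ‖v(-1)‖_M²`. Hence `L` and `H` both lie between `E` and `2 E`,
where `E` is the sum of the squared norms of the summands; it is the same for `L` and for `H` since
the `(I φ_j)'` are orthonormal and the `φ_j` are orthogonal with squared norms `λ_j`.
-/

section Matrix

variable {ι R : Type*} [Fintype ι] [CommRing R] {N A : Matrix ι ι R}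

lemma dotProduct_mulVec_comm_of_isSymm (hN : N.IsSymm) (x y : ι → R) :
    x ⬝ᵥ (N *ᵥ y) = y ⬝ᵥ (N *ᵥ x) := by
  simpa only [hN.eq] using dotProduct_transpose_mulVec N x y

lemma add_dotProduct_mulVec_add_self (hN : N.IsSymm) (x y : ι → R) :
    (x + y) ⬝ᵥ (N *ᵥ (x + y)) = x ⬝ᵥ (N *ᵥ x) + 2 * (x ⬝ᵥ (N *ᵥ y)) + y ⬝ᵥ (N *ᵥ y) := by
  rw [mulVec_add, dotProduct_add, add_dotProduct, add_dotProduct,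
    dotProduct_mulVec_comm_of_isSymm hN y x]
  ring

lemma smul_dotProduct_mulVec_smul (c : R) (x y : ι → R) :
    (c • x) ⬝ᵥ (N *ᵥ (c • y)) = c ^ 2 * (x ⬝ᵥ (N *ᵥ y)) := by
  rw [mulVec_smul, smul_dotProduct, dotProduct_smul, smul_eq_mul, smul_eq_mul]
  ring

variable [DecidableEq ι]

lemma mulVec_inv_mul_mulVec (hA : IsUnit A.det) (x : ι → R) :
    A *ᵥ ((A⁻¹ * N) *ᵥ x) = N *ᵥ x := by
  rw [mulVec_mulVec, mul_nonsing_inv_cancel_left A N hA]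

lemma inv_mul_mulVec_dotProduct_mulVec (hN : N.IsSymm) (hAs : A.IsSymm) (hA : IsUnit A.det)
    (x y : ι → R) : ((A⁻¹ * N) *ᵥ x) ⬝ᵥ (A *ᵥ y) = x ⬝ᵥ (N *ᵥ y) := by
  rw [dotProduct_mulVec_comm_of_isSymm hAs, mulVec_inv_mul_mulVec hA,
    dotProduct_mulVec_comm_of_isSymm hN]

lemma dotProduct_mul_inv_mul_mulVec_self (hN : N.IsSymm) (hAs : A.IsSymm) (hA : IsUnit A.det)
    (x : ι → R) :
    x ⬝ᵥ ((N * A⁻¹ * N) *ᵥ x) = ((A⁻¹ * N) *ᵥ x) ⬝ᵥ (A *ᵥ ((A⁻¹ * N) *ᵥ x)) := by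
  rw [inv_mul_mulVec_dotProduct_mulVec hN hAs hA, mulVec_mulVec, Matrix.mul_assoc]

end Matrix

section PosSemidef

variable {ι : Type*} {A : Matrix ι ι ℝ}

lemma isSymm_of_posSemidef (hA : A.PosSemidef) : A.IsSymm :=
  isHermitian_iff_isSymm.mp hA.isHermitian

variable [Fintype ι]

lemma dotProduct_mulVec_self_nonneg (hA : A.PosSemidef) (x : ι → ℝ) : 0 ≤ x ⬝ᵥ (A *ᵥ x) := by
  simpa using hA.dotProduct_mulVec_nonneg x

lemma add_dotProduct_mulVec_add_self_le (hA : A.PosSemidef) (x y : ι → ℝ) :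
    (x + y) ⬝ᵥ (A *ᵥ (x + y)) ≤ 2 * (x ⬝ᵥ (A *ᵥ x) + y ⬝ᵥ (A *ᵥ y)) := by
  have hsymm := isSymm_of_posSemidef hA
  have hsub := dotProduct_mulVec_self_nonneg hA (x + (-1 : ℝ) • y)
  rw [add_dotProduct_mulVec_add_self hsymm, smul_dotProduct_mulVec_smul, mulVec_smul,
    dotProduct_smul, smul_eq_mul] at hsub
  rw [add_dotProduct_mulVec_add_self hsymm]
  linarith

end PosSemidef

section PolyIntegral

/-- Integration of real polynomials over `[a, b]`, as a linear functional. -/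
noncomputable def polyIntegral (a b : ℝ) : ℝ[X] →ₗ[ℝ] ℝ where
  toFun f := ∫ s in a..b, f.eval s
  map_add' f g := by
    simp only [eval_add]
    exact intervalIntegral.integral_add (f.continuous.intervalIntegrable _ _)
      (g.continuous.intervalIntegrable _ _)
  map_smul' c f := by
    simp only [eval_smul, intervalIntegral.integral_smul, RingHom.id_apply]

variable {a b : ℝ}

lemma polyIntegral_mul (f g : ℝ[X]) :
    polyIntegral a b (f * g) = ∫ s in a..b, f.eval s * g.eval s := by
  simp only [← eval_mul]
  rfl

lemma polyIntegral_derivative (f : ℝ[X]) :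
    polyIntegral a b (derivative f) = f.eval b - f.eval a :=
  intervalIntegral.integral_eq_sub_of_hasDerivAt (fun s _ => f.hasDerivAt s)
    ((derivative f).continuous.intervalIntegrable _ _)

lemma polyIntegral_derivative_mul (f g : ℝ[X]) :
    polyIntegral a b (derivative f * g) =
      f.eval b * g.eval b - f.eval a * g.eval a - polyIntegral a b (f * derivative g) := by
  rw [eq_sub_iff_add_eq, ← map_add, ← derivative_mul, polyIntegral_derivative, eval_mul, eval_mul]

lemma polyIntegral_iterate_derivative_mul (k : ℕ) (f g : ℝ[X])
    (ha : ∀ i < k, (derivative^[i] f).eval a = 0) (hb : ∀ i < k, (derivative^[i] f).eval b = 0) :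
    polyIntegral a b (derivative^[k] f * g) =
      (-1) ^ k * polyIntegral a b (f * derivative^[k] g) := by
  induction k generalizing g with
  | zero => simp
  | succ k ih =>
    rw [Function.iterate_succ_apply', polyIntegral_derivative_mul, ha k k.lt_succ_self,
      hb k k.lt_succ_self, ih _ (fun i hi => ha i (hi.trans k.lt_succ_self))
        (fun i hi => hb i (hi.trans k.lt_succ_self)), ← Function.iterate_succ_apply]
    ring

end PolyIntegral

section Legendre

lemma X_sq_sub_one_pow_eq_left (k : ℕ) :
    ((X : ℝ[X]) ^ 2 - 1) ^ k = (X - C (-1)) ^ k * (X - 1) ^ k := by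
  rw [← mul_pow, C_neg, C_1]
  ring

lemma X_sq_sub_one_pow_eq_right (k : ℕ) :
    ((X : ℝ[X]) ^ 2 - 1) ^ k = (X - C 1) ^ k * (X + 1) ^ k := by
  rw [← mul_pow, C_1]
  ring

lemma eval_legendre {r : ℝ} {k : ℕ} {q : ℝ[X]} (h : (X ^ 2 - 1) ^ k = (X - C r) ^ k * q) :
    (legendre k).eval r = q.eval r / 2 ^ k := by
  have hderiv : (derivative^[k] ((X ^ 2 - 1) ^ k)).eval r = k.factorial • q.eval r :=
    aeval_iterate_derivative_self ((X ^ 2 - 1) ^ k) k r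
      (by rwa [Algebra.algebraMap_self, Polynomial.map_id])
  change (((2 ^ k * k.factorial : ℝ))⁻¹ • derivative^[k] ((X ^ 2 - 1) ^ k)).eval r = _
  rw [eval_smul, hderiv, nsmul_eq_mul, smul_eq_mul]
  field_simp

@[simp]
lemma eval_one_legendre (k : ℕ) : (legendre k).eval 1 = 1 := by
  rw [eval_legendre (X_sq_sub_one_pow_eq_right k)]
  norm_num

@[simp]
lemma eval_neg_one_legendre (k : ℕ) : (legendre k).eval (-1) = (-1) ^ k := by
  rw [eval_legendre (X_sq_sub_one_pow_eq_left k), eval_pow, ← div_pow]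
  norm_num

lemma eval_iterate_derivative_X_sq_sub_one_pow {r : ℝ} {k i : ℕ} {q : ℝ[X]}
    (h : (X ^ 2 - 1) ^ k = (X - C r) ^ k * q) (hi : i < k) :
    (derivative^[i] ((X ^ 2 - 1) ^ k : ℝ[X])).eval r = 0 :=
  aeval_iterate_derivative_of_lt ((X ^ 2 - 1) ^ k) k r
    (by rwa [Algebra.algebraMap_self, Polynomial.map_id]) hi

lemma polyIntegral_legendre_mul {k : ℕ} {g : ℝ[X]} (hg : g.degree < k) :
    polyIntegral (-1) 1 (legendre k * g) = 0 := by
  change polyIntegral (-1) 1 ((_ • derivative^[k] ((X ^ 2 - 1) ^ k)) * g) = 0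
  rw [smul_mul_assoc, map_smul, polyIntegral_iterate_derivative_mul k _ g
    (fun _ => eval_iterate_derivative_X_sq_sub_one_pow (X_sq_sub_one_pow_eq_left k))
    (fun _ => eval_iterate_derivative_X_sq_sub_one_pow (X_sq_sub_one_pow_eq_right k)),
    iterate_derivative_eq_zero_of_degree_lt hg, mul_zero, map_zero, mul_zero, smul_zero]

lemma natDegree_legendre_le (k : ℕ) : (legendre k).natDegree ≤ k := by
  have hbase : (((X : ℝ[X]) ^ 2 - 1) ^ k).natDegree ≤ k * 2 :=
    natDegree_pow_le_of_le k (by compute_degree)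
  calc (legendre k).natDegree
      ≤ (derivative^[k] (((X : ℝ[X]) ^ 2 - 1) ^ k)).natDegree := natDegree_smul_le _ _
    _ ≤ (((X : ℝ[X]) ^ 2 - 1) ^ k).natDegree - k := natDegree_iterate_derivative _ k
    _ ≤ k := by omega

end Legendre

section Reconstruction

variable {p : ℕ} {f g : ℝ[X]}

lemma degree_derivative_lt_of_natDegree_le (hg : g.natDegree ≤ p) : (derivative g).degree < p := by
  rcases eq_or_ne g 0 with rfl | hg0
  · simp
  · exact (degree_derivative_lt hg0).trans_le (natDegree_le_iff_degree_le.mp hg)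

lemma polyIntegral_mul_derivative_legendre_sub (hg : g.natDegree ≤ p) :
    polyIntegral (-1) 1 (g * derivative (legendre p - legendre (p + 1))) =
      -(2 * (-1) ^ p * g.eval (-1)) := by
  have hdeg := degree_derivative_lt_of_natDegree_le hg
  have hdeg' : (derivative g).degree < (p + 1 : ℕ) :=
    degree_derivative_lt_of_natDegree_le (hg.trans p.le_succ)
  rw [mul_comm, polyIntegral_derivative_mul, sub_mul _ _ (derivative g), map_sub,
    polyIntegral_legendre_mul hdeg, polyIntegral_legendre_mul hdeg']
  simp only [eval_sub, eval_one_legendre, eval_neg_one_legendre, pow_succ]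
  ring

lemma polyIntegral_mul_derivative_recon (v : ℝ[X]) (hg : g.natDegree ≤ p) :
    polyIntegral (-1) 1 (g * derivative (recon p v)) =
      polyIntegral (-1) 1 (g * derivative v) + g.eval (-1) * v.eval (-1) := by
  have hsign : ((-1 : ℝ) ^ p) * (-1) ^ p = 1 := by rw [← mul_pow]; simp
  rw [recon, map_sub derivative, derivative_smul, mul_sub, map_sub, mul_smul_comm, map_smul,
    polyIntegral_mul_derivative_legendre_sub hg, smul_eq_mul]
  linear_combination (g.eval (-1) * v.eval (-1)) * hsign

lemma polyIntegral_mul_derivative_recon_add (hf : f.natDegree ≤ p) (hg : g.natDegree ≤ p) :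
    polyIntegral (-1) 1 (derivative (recon p f) * g) +
        polyIntegral (-1) 1 (f * derivative (recon p g)) =
      f.eval 1 * g.eval 1 + f.eval (-1) * g.eval (-1) := by
  rw [mul_comm _ g, polyIntegral_mul_derivative_recon f hg, polyIntegral_mul_derivative_recon g hf,
    mul_comm g, polyIntegral_derivative_mul]
  ring

lemma natDegree_derivative_recon_le (hf : f.natDegree ≤ p) :
    (derivative (recon p f)).natDegree ≤ p := by
  have hlegendre : (legendre p - legendre (p + 1)).natDegree ≤ p + 1 :=
    (natDegree_sub_le _ _).trans
      (max_le ((natDegree_legendre_le p).trans p.le_succ) (natDegree_legendre_le (p + 1)))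
  have hrecon : (recon p f).natDegree ≤ p + 1 :=
    (natDegree_sub_le _ _).trans
      (max_le (hf.trans p.le_succ) ((natDegree_smul_le _ _).trans hlegendre))
  exact (natDegree_derivative_le _).trans (Nat.sub_le_of_le_add hrecon)

end Reconstruction

section VectorPolynomial

variable {n m p : ℕ} {a b : ℝ}

lemma eDv_eq_eEv (φ : Fin (p + 1) → ℝ[X]) (w : Fin (p + 1) → Fin n → ℝ) :
    eDv φ w = eEv (fun j => derivative (φ j)) w :=
  rfl

lemma eIDv_eq_eEv (φ : Fin (p + 1) → ℝ[X]) (w : Fin (p + 1) → Fin n → ℝ) :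
    eIDv φ w = eEv (fun j => derivative (recon p (φ j))) w :=
  rfl

lemma mulVec_eEv (N : Matrix (Fin n) (Fin n) ℝ) (f : Fin (m + 1) → ℝ[X])
    (w : Fin (m + 1) → Fin n → ℝ) (s : ℝ) :
    N *ᵥ eEv f w s = eEv f (fun j => N *ᵥ w j) s := by
  simp only [eEv, mulVec_sum, mulVec_smul]

lemma mulVec_eIDv (N : Matrix (Fin n) (Fin n) ℝ) (φ : Fin (p + 1) → ℝ[X])
    (w : Fin (p + 1) → Fin n → ℝ) (s : ℝ) :
    N *ᵥ eIDv φ w s = eEv (fun j => derivative (recon p (φ j))) (fun j => N *ᵥ w j) s :=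
  mulVec_eEv N _ w s

lemma continuous_eEv (f : Fin (m + 1) → ℝ[X]) (w : Fin (m + 1) → Fin n → ℝ) :
    Continuous (eEv f w) :=
  continuous_finsetSum _ fun j _ => (f j).continuous.smul continuous_const

lemma continuous_eDv (φ : Fin (p + 1) → ℝ[X]) (w : Fin (p + 1) → Fin n → ℝ) :
    Continuous (eDv φ w) :=
  continuous_eEv _ w

lemma continuous_eIDv (φ : Fin (p + 1) → ℝ[X]) (w : Fin (p + 1) → Fin n → ℝ) :
    Continuous (eIDv φ w) :=
  continuous_eEv _ w

lemma intervalIntegrable_dotProduct_mulVec {u v : ℝ → Fin n → ℝ} (hu : Continuous u)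
    (N : Matrix (Fin n) (Fin n) ℝ) (hv : Continuous v) :
    IntervalIntegrable (fun s => u s ⬝ᵥ (N *ᵥ v s)) MeasureTheory.volume a b :=
  (hu.dotProduct (continuous_const.matrix_mulVec hv)).intervalIntegrable a b

lemma eEv_dotProduct_mulVec_eEv (N : Matrix (Fin n) (Fin n) ℝ) (f g : Fin (m + 1) → ℝ[X])
    (y z : Fin (m + 1) → Fin n → ℝ) (s : ℝ) :
    eEv f y s ⬝ᵥ (N *ᵥ eEv g z s) =
      ∑ j, ∑ k, (y j ⬝ᵥ (N *ᵥ z k)) * ((f j).eval s * (g k).eval s) := by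
  simp only [eEv, mulVec_sum, mulVec_smul, sum_dotProduct, dotProduct_sum, smul_dotProduct,
    dotProduct_smul, smul_eq_mul, Finset.mul_sum]
  rw [Finset.sum_comm]
  refine Finset.sum_congr rfl fun j _ => Finset.sum_congr rfl fun k _ => ?_
  ring

lemma integral_eEv_dotProduct_mulVec_eEv (N : Matrix (Fin n) (Fin n) ℝ)
    (f g : Fin (m + 1) → ℝ[X]) (y z : Fin (m + 1) → Fin n → ℝ) :
    ∫ s in a..b, eEv f y s ⬝ᵥ (N *ᵥ eEv g z s) =
      ∑ j, ∑ k, (y j ⬝ᵥ (N *ᵥ z k)) * polyIntegral a b (f j * g k) := by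
  have heval (s : ℝ) : eEv f y s ⬝ᵥ (N *ᵥ eEv g z s) =
      (∑ j, ∑ k, (y j ⬝ᵥ (N *ᵥ z k)) • (f j * g k)).eval s := by
    simp only [eEv_dotProduct_mulVec_eEv, eval_finsetSum, eval_smul, eval_mul, smul_eq_mul]
  calc ∫ s in a..b, eEv f y s ⬝ᵥ (N *ᵥ eEv g z s)
      = polyIntegral a b (∑ j, ∑ k, (y j ⬝ᵥ (N *ᵥ z k)) • (f j * g k)) := by
        simp only [heval]
        rfl
    _ = ∑ j, ∑ k, (y j ⬝ᵥ (N *ᵥ z k)) * polyIntegral a b (f j * g k) := by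
        simp only [map_sum, map_smul, smul_eq_mul]

lemma integral_eEv_dotProduct_mulVec_eEv_self (N : Matrix (Fin n) (Fin n) ℝ)
    {f : Fin (m + 1) → ℝ[X]} {μ : Fin (m + 1) → ℝ}
    (hf : ∀ j k, polyIntegral a b (f j * f k) = if j = k then μ j else 0)
    (y : Fin (m + 1) → Fin n → ℝ) :
    ∫ s in a..b, eEv f y s ⬝ᵥ (N *ᵥ eEv f y s) = ∑ j, μ j * (y j ⬝ᵥ (N *ᵥ y j)) := by
  simp only [integral_eEv_dotProduct_mulVec_eEv, hf, mul_ite, mul_zero, Finset.sum_ite_eq,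
    Finset.mem_univ, if_true, mul_comm]

lemma integral_eEv_dotProduct_mulVec_eIDv (N : Matrix (Fin n) (Fin n) ℝ)
    {f : Fin (p + 1) → ℝ[X]} (hf : ∀ j, (f j).natDegree ≤ p) (φ : Fin (p + 1) → ℝ[X])
    (y w : Fin (p + 1) → Fin n → ℝ) :
    ∫ s in (-1)..1, eEv f y s ⬝ᵥ (N *ᵥ eIDv φ w s) =
      (∫ s in (-1)..1, eEv f y s ⬝ᵥ (N *ᵥ eDv φ w s)) +
        eEv f y (-1) ⬝ᵥ (N *ᵥ eEv φ w (-1)) := by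
  rw [eIDv_eq_eEv, eDv_eq_eEv, integral_eEv_dotProduct_mulVec_eEv,
    integral_eEv_dotProduct_mulVec_eEv, eEv_dotProduct_mulVec_eEv]
  simp only [← Finset.sum_add_distrib, ← mul_add, polyIntegral_mul_derivative_recon _ (hf _)]

lemma two_mul_integral_eIDv_dotProduct_mulVec_eEv {N : Matrix (Fin n) (Fin n) ℝ} (hN : N.IsSymm)
    {φ : Fin (p + 1) → ℝ[X]} (hdeg : ∀ j, (φ j).natDegree ≤ p) (w : Fin (p + 1) → Fin n → ℝ) :
    2 * ∫ s in (-1)..1, eIDv φ w s ⬝ᵥ (N *ᵥ eEv φ w s) =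
      eEv φ w 1 ⬝ᵥ (N *ᵥ eEv φ w 1) + eEv φ w (-1) ⬝ᵥ (N *ᵥ eEv φ w (-1)) := by
  have hcomm : ∫ s in (-1)..1, eIDv φ w s ⬝ᵥ (N *ᵥ eEv φ w s) =
      ∫ s in (-1)..1, eEv φ w s ⬝ᵥ (N *ᵥ eIDv φ w s) := by
    simp only [dotProduct_mulVec_comm_of_isSymm hN (eIDv φ w _)]
  rw [two_mul]
  nth_rw 2 [hcomm]
  rw [eIDv_eq_eEv, integral_eEv_dotProduct_mulVec_eEv, integral_eEv_dotProduct_mulVec_eEv,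
    eEv_dotProduct_mulVec_eEv, eEv_dotProduct_mulVec_eEv]
  simp only [← Finset.sum_add_distrib, ← mul_add,
    polyIntegral_mul_derivative_recon_add (hdeg _) (hdeg _)]

end VectorPolynomial

section QuadraticForms

variable {n p : ℕ} {M A : Matrix (Fin n) (Fin n) ℝ} {a b τ : ℝ} {lam : Fin (p + 1) → ℝ}
  {φ : Fin (p + 1) → ℝ[X]}

/-- The energy `∑ⱼ ‖A⁻¹ M wⱼ‖_A² + (τ/2)² λⱼ ‖wⱼ‖_A²`: the part without cross terms that the forms
`L` and `H` share. -/
noncomputable def splitEnergy (M A : Matrix (Fin n) (Fin n) ℝ) (τ : ℝ) (lam : Fin (p + 1) → ℝ)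
    (w : Fin (p + 1) → Fin n → ℝ) : ℝ :=
  ∑ j, (((A⁻¹ * M) *ᵥ w j) ⬝ᵥ (A *ᵥ ((A⁻¹ * M) *ᵥ w j)) +
    (τ / 2) ^ 2 * lam j * (w j ⬝ᵥ (A *ᵥ w j)))

lemma splitEnergy_pos (hA : A.PosDef) (hτ : τ ≠ 0) (hpos : ∀ j, 0 < lam j)
    {w : Fin (p + 1) → Fin n → ℝ} (hw : w ≠ 0) : 0 < splitEnergy M A τ lam w := by
  have hnonneg := dotProduct_mulVec_self_nonneg hA.posSemidef
  obtain ⟨i, hi⟩ := Function.ne_iff.mp hw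
  have hwi : 0 < w i ⬝ᵥ (A *ᵥ w i) := by simpa using hA.dotProduct_mulVec_pos hi
  refine Finset.sum_pos' (fun j _ => ?_) ⟨i, Finset.mem_univ i, ?_⟩
  · exact add_nonneg (hnonneg _)
      (mul_nonneg (mul_nonneg (sq_nonneg _) (hpos j).le) (hnonneg _))
  · have := hpos i
    exact add_pos_of_nonneg_of_pos (hnonneg _) (by positivity)

section Preconditioner

lemma Hval_eq_sum (hM : M.IsSymm) (hAs : A.IsSymm) (hA : IsUnit A.det)
    (w : Fin (p + 1) → Fin n → ℝ) :
    Hval M A τ lam w = ∑ j, ((A⁻¹ * M) *ᵥ w j + (τ * √(lam j) / 2) • w j) ⬝ᵥ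
      (A *ᵥ ((A⁻¹ * M) *ᵥ w j + (τ * √(lam j) / 2) • w j)) := by
  have hfactor (c : ℝ) (x : Fin n → ℝ) :
      (A⁻¹ * (M + c • A)) *ᵥ x = (A⁻¹ * M) *ᵥ x + c • x := by
    rw [mul_add, mul_smul_comm, nonsing_inv_mul A hA, add_mulVec, smul_mulVec, one_mulVec]
  refine Finset.sum_congr rfl fun j _ => ?_
  rw [dotProduct_mul_inv_mul_mulVec_self (hM.add (hAs.smul _)) hAs hA, hfactor]

lemma splitEnergy_eq_sum (hlam : ∀ j, 0 ≤ lam j) (w : Fin (p + 1) → Fin n → ℝ) :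
    splitEnergy M A τ lam w = ∑ j, (((A⁻¹ * M) *ᵥ w j) ⬝ᵥ (A *ᵥ ((A⁻¹ * M) *ᵥ w j)) +
      ((τ * √(lam j) / 2) • w j) ⬝ᵥ (A *ᵥ ((τ * √(lam j) / 2) • w j))) := by
  refine Finset.sum_congr rfl fun j _ => ?_
  have hcoeff : (τ * √(lam j) / 2) ^ 2 = (τ / 2) ^ 2 * lam j := by
    rw [mul_div_right_comm, mul_pow, Real.sq_sqrt (hlam j)]
  rw [smul_dotProduct_mulVec_smul, hcoeff]

lemma splitEnergy_le_Hval (hM : M.PosSemidef) (hA : A.PosDef) (hτ : 0 ≤ τ)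
    (hlam : ∀ j, 0 ≤ lam j) (w : Fin (p + 1) → Fin n → ℝ) :
    splitEnergy M A τ lam w ≤ Hval M A τ lam w := by
  have hMs := isSymm_of_posSemidef hM
  have hAs := isSymm_of_posSemidef hA.posSemidef
  have hdet := hA.det_pos.ne'.isUnit
  rw [splitEnergy_eq_sum hlam, Hval_eq_sum hMs hAs hdet]
  refine Finset.sum_le_sum fun j _ => ?_
  have hcross : 0 ≤ ((A⁻¹ * M) *ᵥ w j) ⬝ᵥ (A *ᵥ ((τ * √(lam j) / 2) • w j)) := by
    rw [inv_mul_mulVec_dotProduct_mulVec hMs hAs hdet, mulVec_smul, dotProduct_smul]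
    exact mul_nonneg (by positivity) (dotProduct_mulVec_self_nonneg hM _)
  rw [add_dotProduct_mulVec_add_self hAs]
  linarith

lemma Hval_le_two_mul_splitEnergy (hM : M.IsSymm) (hA : A.PosDef) (hlam : ∀ j, 0 ≤ lam j)
    (w : Fin (p + 1) → Fin n → ℝ) :
    Hval M A τ lam w ≤ 2 * splitEnergy M A τ lam w := by
  rw [splitEnergy_eq_sum hlam, Hval_eq_sum hM (isSymm_of_posSemidef hA.posSemidef)
    hA.det_pos.ne'.isUnit, Finset.mul_sum]
  exact Finset.sum_le_sum fun j _ => add_dotProduct_mulVec_add_self_le hA.posSemidef _ _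

end Preconditioner

section DiscontinuousGalerkin

/-- Evaluation at `s` of `P v = A⁻¹ M (I v)' + (τ/2) v` for `v = ∑ⱼ φⱼ ⊗ wⱼ`; the analogue of `Pop`
in the basis `φ`. -/
noncomputable def ePop (M A : Matrix (Fin n) (Fin n) ℝ) (τ : ℝ) (φ : Fin (p + 1) → ℝ[X])
    (w : Fin (p + 1) → Fin n → ℝ) (s : ℝ) : Fin n → ℝ :=
  (A⁻¹ * M) *ᵥ eIDv φ w s + (τ / 2) • eEv φ w s

lemma continuous_mulVec_eIDv (N : Matrix (Fin n) (Fin n) ℝ) (φ : Fin (p + 1) → ℝ[X])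
    (w : Fin (p + 1) → Fin n → ℝ) : Continuous fun s => N *ᵥ eIDv φ w s :=
  continuous_const.matrix_mulVec (continuous_eIDv φ w)

lemma continuous_ePop (w : Fin (p + 1) → Fin n → ℝ) : Continuous (ePop M A τ φ w) :=
  (continuous_mulVec_eIDv (A⁻¹ * M) φ w).add ((continuous_eEv φ w).const_smul (τ / 2))

lemma integral_ePop_dotProduct_mulVec (N : Matrix (Fin n) (Fin n) ℝ)
    (w : Fin (p + 1) → Fin n → ℝ) {u : ℝ → Fin n → ℝ} (hu : Continuous u) :
    ∫ s in a..b, ePop M A τ φ w s ⬝ᵥ (N *ᵥ u s) =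
      (∫ s in a..b, ((A⁻¹ * M) *ᵥ eIDv φ w s) ⬝ᵥ (N *ᵥ u s)) +
        τ / 2 * ∫ s in a..b, eEv φ w s ⬝ᵥ (N *ᵥ u s) := by
  simp only [ePop, add_dotProduct, smul_dotProduct, smul_eq_mul]
  rw [intervalIntegral.integral_add
    (intervalIntegrable_dotProduct_mulVec (continuous_mulVec_eIDv _ φ w) N hu)
    ((intervalIntegrable_dotProduct_mulVec (continuous_eEv φ w) N hu).const_mul _),
    intervalIntegral.integral_const_mul]

lemma integral_ePop_dotProduct_mulVec_eIDv (N : Matrix (Fin n) (Fin n) ℝ)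
    (hdeg : ∀ j, (φ j).natDegree ≤ p) (w : Fin (p + 1) → Fin n → ℝ) :
    ∫ s in (-1)..1, ePop M A τ φ w s ⬝ᵥ (N *ᵥ eIDv φ w s) =
      (∫ s in (-1)..1, ePop M A τ φ w s ⬝ᵥ (N *ᵥ eDv φ w s)) +
        ePop M A τ φ w (-1) ⬝ᵥ (N *ᵥ eEv φ w (-1)) := by
  have hdegD : ∀ j, (derivative (recon p (φ j))).natDegree ≤ p :=
    fun j => natDegree_derivative_recon_le (hdeg j)
  rw [integral_ePop_dotProduct_mulVec N w (continuous_eIDv φ w),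
    integral_ePop_dotProduct_mulVec N w (continuous_eDv φ w), ePop, add_dotProduct,
    smul_dotProduct, smul_eq_mul]
  simp only [mulVec_eIDv (A⁻¹ * M), integral_eEv_dotProduct_mulVec_eIDv N hdegD,
    integral_eEv_dotProduct_mulVec_eIDv N hdeg]
  ring

lemma Lval_eq_integral (hA : IsUnit A.det) (hdeg : ∀ j, (φ j).natDegree ≤ p)
    (w : Fin (p + 1) → Fin n → ℝ) :
    Lval M A τ φ w =
      ∫ s in (-1)..1, ePop M A τ φ w s ⬝ᵥ (A *ᵥ ePop M A τ φ w s) := by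
  have hA_ePop (s : ℝ) : A *ᵥ ePop M A τ φ w s = M *ᵥ eIDv φ w s + (τ / 2) • (A *ᵥ eEv φ w s) := by
    rw [ePop, mulVec_add, mulVec_inv_mul_mulVec hA, mulVec_smul]
  simp only [hA_ePop, dotProduct_add, dotProduct_smul, smul_eq_mul]
  rw [intervalIntegral.integral_add
    (intervalIntegrable_dotProduct_mulVec (continuous_ePop w) M (continuous_eIDv φ w))
    ((intervalIntegrable_dotProduct_mulVec (continuous_ePop w) A (continuous_eEv φ w)).const_mul _),
    intervalIntegral.integral_const_mul, integral_ePop_dotProduct_mulVec_eIDv M hdeg]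
  rfl

/-- The integrand `‖A⁻¹ M (I v)'(s)‖_A² + ‖(τ/2) v(s)‖_A²`: the integrand `‖P v‖_A²` of `L(v, v)`
without its cross term. -/
noncomputable def splitDensity (M A : Matrix (Fin n) (Fin n) ℝ) (τ : ℝ) (φ : Fin (p + 1) → ℝ[X])
    (w : Fin (p + 1) → Fin n → ℝ) (s : ℝ) : ℝ :=
  ((A⁻¹ * M) *ᵥ eIDv φ w s) ⬝ᵥ (A *ᵥ ((A⁻¹ * M) *ᵥ eIDv φ w s)) +
    ((τ / 2) • eEv φ w s) ⬝ᵥ (A *ᵥ ((τ / 2) • eEv φ w s))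

lemma intervalIntegrable_splitDensity (w : Fin (p + 1) → Fin n → ℝ) :
    IntervalIntegrable (splitDensity M A τ φ w) MeasureTheory.volume a b :=
  have hD := continuous_mulVec_eIDv (A⁻¹ * M) φ w
  have hE := (continuous_eEv φ w).const_smul (τ / 2)
  (intervalIntegrable_dotProduct_mulVec hD A hD).add (intervalIntegrable_dotProduct_mulVec hE A hE)

lemma integral_splitDensity
    (hD : ∀ j k, polyIntegral a b (derivative (recon p (φ j)) * derivative (recon p (φ k))) =
      if j = k then 1 else 0)
    (hφ : ∀ j k, polyIntegral a b (φ j * φ k) = if j = k then lam j else 0)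
    (w : Fin (p + 1) → Fin n → ℝ) :
    ∫ s in a..b, splitDensity M A τ φ w s = splitEnergy M A τ lam w := by
  have hDcont := continuous_mulVec_eIDv (A⁻¹ * M) φ w
  have hEcont := continuous_eEv φ w
  simp only [splitDensity, smul_dotProduct_mulVec_smul]
  rw [intervalIntegral.integral_add (intervalIntegrable_dotProduct_mulVec hDcont A hDcont)
    ((intervalIntegrable_dotProduct_mulVec hEcont A hEcont).const_mul _),
    intervalIntegral.integral_const_mul, integral_eEv_dotProduct_mulVec_eEv_self A hφ]
  simp only [mulVec_eIDv (A⁻¹ * M)]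
  rw [integral_eEv_dotProduct_mulVec_eEv_self A hD, Finset.mul_sum, ← Finset.sum_add_distrib]
  simp only [splitEnergy, one_mul, mul_assoc]

lemma ePop_dotProduct_mulVec_self (hM : M.IsSymm) (hAs : A.IsSymm) (hA : IsUnit A.det)
    (w : Fin (p + 1) → Fin n → ℝ) (s : ℝ) :
    ePop M A τ φ w s ⬝ᵥ (A *ᵥ ePop M A τ φ w s) =
      splitDensity M A τ φ w s + τ * (eIDv φ w s ⬝ᵥ (M *ᵥ eEv φ w s)) := by
  have hcross : ((A⁻¹ * M) *ᵥ eIDv φ w s) ⬝ᵥ (A *ᵥ ((τ / 2) • eEv φ w s)) =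
      τ / 2 * (eIDv φ w s ⬝ᵥ (M *ᵥ eEv φ w s)) := by
    rw [inv_mul_mulVec_dotProduct_mulVec hM hAs hA, mulVec_smul, dotProduct_smul, smul_eq_mul]
  rw [ePop, add_dotProduct_mulVec_add_self hAs, hcross, splitDensity]
  ring

lemma integral_splitDensity_le_Lval (hM : M.PosSemidef) (hAs : A.IsSymm) (hA : IsUnit A.det)
    (hτ : 0 ≤ τ) (hdeg : ∀ j, (φ j).natDegree ≤ p) (w : Fin (p + 1) → Fin n → ℝ) :
    ∫ s in (-1)..1, splitDensity M A τ φ w s ≤ Lval M A τ φ w := by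
  have hMs := isSymm_of_posSemidef hM
  have hcross : 0 ≤ ∫ s in (-1)..1, eIDv φ w s ⬝ᵥ (M *ᵥ eEv φ w s) := by
    linarith [two_mul_integral_eIDv_dotProduct_mulVec_eEv hMs hdeg w,
      dotProduct_mulVec_self_nonneg hM (eEv φ w 1), dotProduct_mulVec_self_nonneg hM (eEv φ w (-1))]
  rw [Lval_eq_integral hA hdeg]
  simp only [ePop_dotProduct_mulVec_self hMs hAs hA]
  rw [intervalIntegral.integral_add (intervalIntegrable_splitDensity w)
    ((intervalIntegrable_dotProduct_mulVec (continuous_eIDv φ w) M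
      (continuous_eEv φ w)).const_mul _), intervalIntegral.integral_const_mul]
  exact le_add_of_nonneg_right (mul_nonneg hτ hcross)

lemma Lval_le_two_mul_integral_splitDensity (hA : A.PosDef) (hdeg : ∀ j, (φ j).natDegree ≤ p)
    (w : Fin (p + 1) → Fin n → ℝ) :
    Lval M A τ φ w ≤ 2 * ∫ s in (-1)..1, splitDensity M A τ φ w s := by
  rw [Lval_eq_integral hA.det_pos.ne'.isUnit hdeg, ← intervalIntegral.integral_const_mul]
  exact intervalIntegral.integral_mono_on (by norm_num)
    (intervalIntegrable_dotProduct_mulVec (continuous_ePop w) A (continuous_ePop w))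
    ((intervalIntegrable_splitDensity w).const_mul 2)
    fun s _ => add_dotProduct_mulVec_add_self_le hA.posSemidef _ _

end DiscontinuousGalerkin

end QuadraticForms

theorem spectral_equivalence_general {n p : ℕ} (M A : Matrix (Fin n) (Fin n) ℝ)
    (hM : M.PosSemidef) (hA : A.PosDef) (τ : ℝ) (hτ : 0 < τ)
    (lam : Fin (p + 1) → ℝ) (φ : Fin (p + 1) → Polynomial ℝ)
    (hdeg : ∀ j, (φ j).natDegree ≤ p)
    (hpos : ∀ j, 0 < lam j)
    (horth : ∀ j k : Fin (p + 1),
      (∫ s in (-1 : ℝ)..1,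
          (Polynomial.derivative (recon p (φ j))).eval s *
            (Polynomial.derivative (recon p (φ k))).eval s)
        = if j = k then 1 else 0)
    (heig : ∀ j : Fin (p + 1), ∀ v : Polynomial ℝ, v.natDegree ≤ p →
      lam j * (∫ s in (-1 : ℝ)..1,
          (Polynomial.derivative (recon p (φ j))).eval s *
            (Polynomial.derivative (recon p v)).eval s)
        = ∫ s in (-1 : ℝ)..1, (φ j).eval s * v.eval s)
    (w : Fin (p + 1) → Fin n → ℝ) (hw : w ≠ 0) :
    (1 / 2 : ℝ) ≤ Lval M A τ φ w / Hval M A τ lam w ∧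
      Lval M A τ φ w / Hval M A τ lam w ≤ 2 := by
  have hD (j k : Fin (p + 1)) : polyIntegral (-1) 1
      (derivative (recon p (φ j)) * derivative (recon p (φ k))) = if j = k then 1 else 0 := by
    rw [polyIntegral_mul, horth]
  have hφ (j k : Fin (p + 1)) :
      polyIntegral (-1) 1 (φ j * φ k) = if j = k then lam j else 0 := by
    rw [polyIntegral_mul, ← heig j (φ k) (hdeg k), horth, mul_ite, mul_one, mul_zero]
  have hlam : ∀ j, 0 ≤ lam j := fun j => (hpos j).le
  have hE_eq := integral_splitDensity (M := M) (A := A) (τ := τ) hD hφ w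
  have hE_pos : 0 < splitEnergy M A τ lam w := splitEnergy_pos hA hτ.ne' hpos hw
  have hE_le_H := splitEnergy_le_Hval hM hA hτ.le hlam w
  have hH_le := Hval_le_two_mul_splitEnergy (τ := τ) (isSymm_of_posSemidef hM) hA hlam w
  have hE_le_L := integral_splitDensity_le_Lval hM (isSymm_of_posSemidef hA.posSemidef)
    hA.det_pos.ne'.isUnit hτ.le hdeg w
  have hL_le := Lval_le_two_mul_integral_splitDensity (M := M) (τ := τ) hA hdeg w
  have hH_pos : 0 < Hval M A τ lam w := hE_pos.trans_le hE_le_H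
  rw [le_div_iff₀ hH_pos, div_le_iff₀ hH_pos]
  constructor <;> linarith

/-- **Spectral equivalence of `L` and `H`.** Let `φ_j ∈ P_p` and `λ_j > 0` satisfy the
generalized eigenvalue problem `λ_j ∫_{−1}^{1} (I φ_j)'(I v)' ds = ∫_{−1}^{1} φ_j v ds` for
all `v ∈ P_p`, orthonormalized so that `∫_{−1}^{1} (I φ_j)'(I φ_k)' ds = δ_{jk}`. Then for any
symmetric positive definite `A`, `M`, any `τ > 0` and any `p ≥ 0`, every nonzero
`v = Σ_j φ_j ⊗ w_j ∈ V_p` satisfies `1/2 ≤ L(v,v)/H(v) ≤ 2`. -/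
theorem spectral_equivalence {n p : ℕ} (M A : Matrix (Fin n) (Fin n) ℝ)
    (hM : M.PosDef) (hA : A.PosDef) (τ : ℝ) (hτ : 0 < τ)
    (lam : Fin (p + 1) → ℝ) (φ : Fin (p + 1) → Polynomial ℝ)
    (hdeg : ∀ j, (φ j).natDegree ≤ p)
    (hpos : ∀ j, 0 < lam j)
    (horth : ∀ j k : Fin (p + 1),
      (∫ s in (-1 : ℝ)..1,
          (Polynomial.derivative (recon p (φ j))).eval s *
            (Polynomial.derivative (recon p (φ k))).eval s)
        = if j = k then 1 else 0)
    (heig : ∀ j : Fin (p + 1), ∀ v : Polynomial ℝ, v.natDegree ≤ p →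
      lam j * (∫ s in (-1 : ℝ)..1,
          (Polynomial.derivative (recon p (φ j))).eval s *
            (Polynomial.derivative (recon p v)).eval s)
        = ∫ s in (-1 : ℝ)..1, (φ j).eval s * v.eval s)
    (w : Fin (p + 1) → Fin n → ℝ) (hw : w ≠ 0) :
    (1 / 2 : ℝ) ≤ Lval M A τ φ w / Hval M A τ lam w ∧
      Lval M A τ φ w / Hval M A τ lam w ≤ 2 :=
  spectral_equivalence_general M A hM.posSemidef hA τ hτ lam φ hdeg hpos horth heig w hw
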